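/- arXiv:2504.07873 — 2 statements merged into one kernel-verified Lean document; each statement's English description precedes it below -/
import Mathlib

section
/- Let m be an odd positive integer and let a, b be real numbers. If ab ≥ 0, or if |a| ≤ b, then |a^m − b^m| ≥ |a − b|·|a|^{m−1}. -/
/-!
Write `a ^ (n + 1) - b ^ (n + 1) = (a - b) * a ^ n + b * (a ^ n - b ^ n)`. The claim is that adding
the second term does not decrease the absolute value of the first, which holds as soon as the two
terms do not have opposite signs.
-/

section PowDifference

variable {R : Type*} [CommRing R] [LinearOrder R] [IsStrictOrderedRing R] {a b : R}

lemma abs_le_abs_add_of_mul_nonneg (h : 0 ≤ a * b) : |a| ≤ |a + b| := by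
  rw [(abs_add_eq_add_abs_iff a b).2 (mul_nonneg_iff.1 h)]
  exact le_add_of_nonneg_right (abs_nonneg b)

lemma abs_sub_mul_abs_pow_le_of_summands_mul_nonneg {n : ℕ}
    (h : 0 ≤ ((a - b) * a ^ n) * (b * (a ^ n - b ^ n))) :
    |a - b| * |a| ^ n ≤ |a ^ (n + 1) - b ^ (n + 1)| :=
  calc |a - b| * |a| ^ n = |(a - b) * a ^ n| := by rw [abs_mul, abs_pow]
    _ ≤ |(a - b) * a ^ n + b * (a ^ n - b ^ n)| := abs_le_abs_add_of_mul_nonneg h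
    _ = |a ^ (n + 1) - b ^ (n + 1)| := by ring_nf

lemma abs_sub_mul_abs_pow_le_of_nonneg (ha : 0 ≤ a) (hb : 0 ≤ b) (n : ℕ) :
    |a - b| * |a| ^ n ≤ |a ^ (n + 1) - b ^ (n + 1)| := by
  apply abs_sub_mul_abs_pow_le_of_summands_mul_nonneg
  have han : 0 ≤ a ^ n := pow_nonneg ha n
  rcases le_total a b with hab | hba
  · have hpow : a ^ n ≤ b ^ n := pow_le_pow_left₀ ha hab n
    exact mul_nonneg_of_nonpos_of_nonpos
      (mul_nonpos_of_nonpos_of_nonneg (sub_nonpos.2 hab) han)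
      (mul_nonpos_of_nonneg_of_nonpos hb (sub_nonpos.2 hpow))
  · have hpow : b ^ n ≤ a ^ n := pow_le_pow_left₀ hb hba n
    exact mul_nonneg (mul_nonneg (sub_nonneg.2 hba) han) (mul_nonneg hb (sub_nonneg.2 hpow))

lemma abs_neg_pow_sub_neg_pow (a b : R) (n : ℕ) : |(-a) ^ n - (-b) ^ n| = |a ^ n - b ^ n| := by
  rw [neg_pow a, neg_pow b, ← mul_sub, abs_mul, abs_neg_one_pow, one_mul]

lemma abs_sub_mul_abs_pow_le_of_mul_nonneg (h : 0 ≤ a * b) (n : ℕ) :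
    |a - b| * |a| ^ n ≤ |a ^ (n + 1) - b ^ (n + 1)| := by
  rcases mul_nonneg_iff.1 h with ⟨ha, hb⟩ | ⟨ha, hb⟩
  · exact abs_sub_mul_abs_pow_le_of_nonneg ha hb n
  · have hneg := abs_sub_mul_abs_pow_le_of_nonneg (neg_nonneg.2 ha) (neg_nonneg.2 hb) n
    rwa [abs_neg_pow_sub_neg_pow, abs_neg, neg_sub_neg, abs_sub_comm] at hneg

lemma mul_le_mul_self_of_abs_le_abs (h : |a| ≤ |b|) : a * b ≤ b * b :=
  calc a * b ≤ |a| * |b| := (le_abs_self _).trans_eq (abs_mul a b)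
    _ ≤ |b| * |b| := mul_le_mul_of_nonneg_right h (abs_nonneg b)
    _ = b * b := abs_mul_abs_self b

lemma abs_sub_mul_abs_pow_le_of_even {n : ℕ} (hn : Even n) (h : |a| ≤ |b|) :
    |a - b| * |a| ^ n ≤ |a ^ (n + 1) - b ^ (n + 1)| := by
  apply abs_sub_mul_abs_pow_le_of_summands_mul_nonneg
  have hpow : a ^ n ≤ b ^ n := by
    rw [← hn.pow_abs a, ← hn.pow_abs b]
    exact pow_le_pow_left₀ (abs_nonneg a) h n
  have hmul : (a - b) * b ≤ 0 := by
    rw [sub_mul]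
    exact sub_nonpos.2 (mul_le_mul_self_of_abs_le_abs h)
  calc 0 ≤ a ^ n * (((a - b) * b) * (a ^ n - b ^ n)) :=
        mul_nonneg (hn.pow_nonneg a) (mul_nonneg_of_nonpos_of_nonpos hmul (sub_nonpos.2 hpow))
    _ = ((a - b) * a ^ n) * (b * (a ^ n - b ^ n)) := by ring

theorem odd_power_difference_bound_general {n : ℕ} (h : 0 ≤ a * b ∨ Even n ∧ |a| ≤ |b|) :
    |a - b| * |a| ^ n ≤ |a ^ (n + 1) - b ^ (n + 1)| := by
  rcases h with hab | ⟨hn, hab⟩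
  · exact abs_sub_mul_abs_pow_le_of_mul_nonneg hab n
  · exact abs_sub_mul_abs_pow_le_of_even hn hab

end PowDifference

/-- inequality (20): for an odd positive integer `m` and real `a, b`, if
`ab ≥ 0` or `|a| ≤ b`, then `|a^m - b^m| ≥ |a - b|·|a|^{m-1}`. -/
theorem odd_power_difference_bound
    (m : ℕ) (hm : Odd m) (hm0 : 0 < m) (a b : ℝ)
    (h : a * b ≥ 0 ∨ |a| ≤ b) :
    |a ^ m - b ^ m| ≥ |a - b| * |a| ^ (m - 1) := by
  obtain ⟨k, rfl⟩ := hm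
  exact odd_power_difference_bound_general
    (h.imp_right fun hab => ⟨even_two_mul k, hab.trans (le_abs_self b)⟩)
end

section
/- Let n be an even integer greater than 2. For every δ > 0 there exists M > 0 such that for every integer s > M and every t with |t| ≤ 1/2: ∑_{k∈ℤ} (2πk+πt)^{2(n−2)} / ((2πs+π)^n − (2πk+πt)^n)² < δ. -/
open Real

/-!
Put `a = 2πs + π` and `x = 2πk + πt`. Since `|a| |x| ^ (n - 2)` is one of the terms of the geometric
sum `(|a| ^ n - |x| ^ n) / (|a| - |x|)`, the `k`-th summand is at most `a⁻² (|a| - |x|)⁻²`, hence at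
most `a⁻² ((a - x)⁻² + (a + x)⁻²)`. Both `a - x` and `a + x` are `π` times an odd integer plus an
error `∓πt` that stays a fixed proportion away from cancelling it, so summing over `k` costs only a
constant, and the whole series is `O(a⁻²)`, uniformly in `t`.
-/

section OrderedRing

variable {R : Type*} [CommRing R] [LinearOrder R] [IsStrictOrderedRing R] {a b : R} {i n : ℕ}

lemma pow_mul_pow_mul_abs_sub_le_abs_pow_sub_pow (ha : 0 ≤ a) (hb : 0 ≤ b) (hi : i < n) :
    a ^ i * b ^ (n - 1 - i) * |a - b| ≤ |a ^ n - b ^ n| := by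
  have hterm : ∀ j ∈ Finset.range n, 0 ≤ a ^ j * b ^ (n - 1 - j) := fun j _ => by positivity
  calc a ^ i * b ^ (n - 1 - i) * |a - b|
      ≤ (∑ j ∈ Finset.range n, a ^ j * b ^ (n - 1 - j)) * |a - b| := by
        gcongr
        exact Finset.single_le_sum hterm (Finset.mem_range.2 hi)
    _ = |a ^ n - b ^ n| := by
        rw [← geom_sum₂_mul, abs_mul, abs_of_nonneg (Finset.sum_nonneg hterm)]

lemma abs_pow_mul_pow_mul_abs_abs_sub_abs_le (hi : i < n) :
    |a ^ i * b ^ (n - 1 - i)| * |(|a| - |b|)| ≤ |a ^ n - b ^ n| :=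
  calc |a ^ i * b ^ (n - 1 - i)| * |(|a| - |b|)|
      ≤ |(|a| ^ n - |b| ^ n)| := by
        rw [abs_mul, abs_pow, abs_pow]
        exact pow_mul_pow_mul_abs_sub_le_abs_pow_sub_pow (abs_nonneg a) (abs_nonneg b) hi
    _ ≤ |a ^ n - b ^ n| := by
        rw [← abs_pow, ← abs_pow]
        exact abs_abs_sub_abs_le _ _

lemma one_sub_mul_abs_le_abs_add {r x u : R} (hx : 1 ≤ |x|) (hu : |u| ≤ r) :
    (1 - r) * |x| ≤ |x + u| := by
  have hr : r ≤ r * |x| := le_mul_of_one_le_right ((abs_nonneg u).trans hu) hx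
  have htri := abs_sub_abs_le_abs_sub x (-u)
  rw [abs_neg, sub_neg_eq_add] at htri
  linarith

lemma one_le_abs_two_mul_add_one (j : ℤ) : 1 ≤ |(2 * j + 1 : R)| := by
  exact_mod_cast Int.one_le_abs (show 2 * j + 1 ≠ 0 by lia)

lemma two_mul_add_one_add_ne_zero {u : R} (hu : |u| < 1) (j : ℤ) : (2 * j + 1 + u : R) ≠ 0 := by
  intro h
  have habs : |(2 * j + 1 : R)| = |u| := by rw [eq_neg_of_add_eq_zero_left h, abs_neg]
  exact (one_le_abs_two_mul_add_one j).not_gt (habs ▸ hu)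

end OrderedRing

section OrderedField

variable {K : Type*} [Field K] [LinearOrder K] [IsStrictOrderedRing K] {a b : K} {i n : ℕ}

lemma sq_pow_mul_pow_div_pow_sub_pow_le (hi : i < n) (hab : |a| ≠ |b|) :
    (a ^ i * b ^ (n - 1 - i) / (a ^ n - b ^ n)) ^ 2 ≤ ((|a| - |b|) ^ 2)⁻¹ := by
  rw [← inv_pow, sq_le_sq, abs_div, abs_inv]
  refine div_le_of_le_mul₀ (abs_nonneg _) (by positivity) ?_
  rw [inv_mul_eq_div, le_div_iff₀ (abs_pos.2 (sub_ne_zero.2 hab))]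
  exact abs_pow_mul_pow_mul_abs_abs_sub_abs_le hi

lemma inv_sq_abs_sub_abs_le (a b : K) :
    ((|a| - |b|) ^ 2)⁻¹ ≤ ((a - b) ^ 2)⁻¹ + ((a + b) ^ 2)⁻¹ := by
  have hsub : 0 ≤ ((a - b) ^ 2)⁻¹ := by positivity
  have hadd : 0 ≤ ((a + b) ^ 2)⁻¹ := by positivity
  have hcases : (|a| - |b|) ^ 2 = (a - b) ^ 2 ∨ (|a| - |b|) ^ 2 = (a + b) ^ 2 := by
    rcases abs_choice a with ha | ha <;> rcases abs_choice b with hb | hb <;> rw [ha, hb]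
    exacts [.inl rfl, .inr (by ring), .inr (by ring), .inl (by ring)]
  rcases hcases with h | h <;> rw [h] <;> linarith

lemma pow_div_sq_pow_sub_pow_le (hn : 2 ≤ n) (ha : a ≠ 0) (hsub : a - b ≠ 0) (hadd : a + b ≠ 0) :
    b ^ (2 * (n - 2)) / (a ^ n - b ^ n) ^ 2
      ≤ (a ^ 2)⁻¹ * (((a - b) ^ 2)⁻¹ + ((a + b) ^ 2)⁻¹) := by
  have hab : |a| ≠ |b| := fun h =>
    (abs_eq_abs.1 h).elim (sub_ne_zero.1 hsub) fun h' => hadd (eq_neg_iff_add_eq_zero.1 h')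
  calc b ^ (2 * (n - 2)) / (a ^ n - b ^ n) ^ 2
      = (a ^ 2)⁻¹ * (a ^ 1 * b ^ (n - 1 - 1) / (a ^ n - b ^ n)) ^ 2 := by
        rw [Nat.sub_sub, pow_one, div_pow, mul_pow, mul_div_assoc, inv_mul_cancel_left₀ (by simpa),
          ← pow_mul, mul_comm 2]
    _ ≤ (a ^ 2)⁻¹ * (((a - b) ^ 2)⁻¹ + ((a + b) ^ 2)⁻¹) := by
        gcongr
        exact (sq_pow_mul_pow_div_pow_sub_pow_le hn hab).trans (inv_sq_abs_sub_abs_le a b)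

lemma inv_sq_mul_odd_add_le (c : K) {r u : K} (hr : r < 1) (hu : |u| ≤ r) (j : ℤ) :
    ((c * (2 * j + 1 + u)) ^ 2)⁻¹ ≤ ((c * (1 - r) * (2 * j + 1)) ^ 2)⁻¹ := by
  have hodd : 1 ≤ |(2 * j + 1 : K)| := one_le_abs_two_mul_add_one j
  have hr' : 0 < 1 - r := sub_pos.2 hr
  have hodd0 : (2 * j + 1 : K) ≠ 0 := abs_pos.1 (one_pos.trans_le hodd)
  rw [mul_assoc, mul_pow c, mul_pow c, mul_inv, mul_inv]
  refine mul_le_mul_of_nonneg_left (inv_anti₀ (by positivity) (sq_le_sq.2 ?_)) (by positivity)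
  rw [abs_mul, abs_of_pos hr']
  exact one_sub_mul_abs_le_abs_add hodd hu

end OrderedField

lemma summable_inv_sq_mul_odd (c : ℝ) : Summable fun j : ℤ => ((c * (2 * j + 1)) ^ 2)⁻¹ := by
  have hinj : Function.Injective fun j : ℤ => 2 * j + 1 := fun j k h => by
    simpa using h
  have hodd := (Real.summable_one_div_int_pow.2 one_lt_two).comp_injective hinj
  simpa [Function.comp_def, mul_pow, mul_comm] using hodd.mul_left (c ^ 2)⁻¹

lemma abs_le_sq_two_mul_pi_mul_add_pi (s : ℤ) : |(s : ℝ)| ≤ (2 * π * s + π) ^ 2 := by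
  have hint : |s| ≤ (2 * s + 1) ^ 2 := by
    rcases abs_cases s with ⟨h, _⟩ | ⟨h, _⟩ <;> rw [h] <;> nlinarith
  calc |(s : ℝ)| ≤ (2 * s + 1 : ℝ) ^ 2 := by exact_mod_cast hint
    _ ≤ π ^ 2 * (2 * s + 1) ^ 2 :=
        le_mul_of_one_le_left (sq_nonneg _) (one_le_pow₀ (by linarith [pi_gt_three]))
    _ = (2 * π * s + π) ^ 2 := by ring

lemma hasSum_comp_sub_add_comp_add {G α : Type*} [AddGroup G] [AddCommMonoid α]
    [TopologicalSpace α] [ContinuousAdd α] {f : G → α} {S : α} (hf : HasSum f S) (s : G) :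
    HasSum (fun k => f (s - k) + f (s + k)) (S + S) :=
  ((Equiv.subLeft s).hasSum_iff.2 hf).add ((Equiv.addLeft s).hasSum_iff.2 hf)

lemma tail_summand_le {n : ℕ} (hn : 2 ≤ n) {r t : ℝ} (hr : r < 1) (ht : |t| ≤ r) (s k : ℤ) :
    (2 * π * k + π * t) ^ (2 * (n - 2)) /
        ((2 * π * s + π) ^ n - (2 * π * k + π * t) ^ n) ^ 2
      ≤ ((2 * π * s + π) ^ 2)⁻¹ * (((π * (1 - r) * (2 * (s - k : ℤ) + 1)) ^ 2)⁻¹ +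
          ((π * (1 - r) * (2 * (s + k : ℤ) + 1)) ^ 2)⁻¹) := by
  have hneg : |-t| ≤ r := by rwa [abs_neg]
  have hodd_ne {u : ℝ} (hu : |u| < 1) (j : ℤ) : π * (2 * j + 1 + u) ≠ 0 :=
    mul_ne_zero pi_ne_zero (two_mul_add_one_add_ne_zero hu j)
  have ha : 2 * π * s + π = π * (2 * s + 1 + 0) := by ring
  have hsub : 2 * π * s + π - (2 * π * k + π * t) = π * (2 * (s - k : ℤ) + 1 + -t) := by
    push_cast; ring
  have hadd : 2 * π * s + π + (2 * π * k + π * t) = π * (2 * (s + k : ℤ) + 1 + t) := by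
    push_cast; ring
  refine (pow_div_sq_pow_sub_pow_le hn (ha ▸ hodd_ne (by simp) s)
    (hsub ▸ hodd_ne (hneg.trans_lt hr) _) (hadd ▸ hodd_ne (ht.trans_lt hr) _)).trans ?_
  rw [hsub, hadd]
  exact mul_le_mul_of_nonneg_left (add_le_add (inv_sq_mul_odd_add_le π hr hneg _)
    (inv_sq_mul_odd_add_le π hr ht _)) (by positivity)

lemma exists_hasSum_tail_le {n : ℕ} (hn : 2 ≤ n) {r t : ℝ} (hr : r < 1) (ht : |t| ≤ r) (s : ℤ) :
    ∃ S ≤ ((2 * π * s + π) ^ 2)⁻¹ * (2 * ∑' j : ℤ, ((π * (1 - r) * (2 * j + 1)) ^ 2)⁻¹),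
      HasSum (fun k : ℤ => (2 * π * k + π * t) ^ (2 * (n - 2)) /
        ((2 * π * s + π) ^ n - (2 * π * k + π * t) ^ n) ^ 2) S := by
  have hmajorant := (hasSum_comp_sub_add_comp_add
    (summable_inv_sq_mul_odd (π * (1 - r))).hasSum s).mul_left ((2 * π * s + π) ^ 2)⁻¹
  have hsummable := Summable.of_nonneg_of_le
    (fun k => div_nonneg ((even_two_mul _).pow_nonneg _) (sq_nonneg _))
    (tail_summand_le hn hr ht s) hmajorant.summable
  rw [← two_mul] at hmajorant
  exact ⟨_, hasSum_le (tail_summand_le hn hr ht s) hsummable.hasSum hmajorant, hsummable.hasSum⟩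

theorem tail_sum_small_general {n : ℕ} (hn : 2 ≤ n) {r : ℝ} (hr : r < 1) {δ : ℝ} (hδ : 0 < δ) :
    ∃ M : ℝ, 0 < M ∧ ∀ s : ℤ, M < |(s : ℝ)| → ∀ t : ℝ, |t| ≤ r →
      ∃ S < δ, HasSum (fun k : ℤ => (2 * π * k + π * t) ^ (2 * (n - 2)) /
        ((2 * π * s + π) ^ n - (2 * π * k + π * t) ^ n) ^ 2) S := by
  set C : ℝ := 2 * ∑' j : ℤ, ((π * (1 - r) * (2 * j + 1)) ^ 2)⁻¹
  have : 0 ≤ C := by positivity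
  refine ⟨C / δ + 1, by positivity, fun s hs t ht => ?_⟩
  obtain ⟨S, hSC, hS⟩ := exists_hasSum_tail_le hn hr ht s
  refine ⟨S, hSC.trans_lt ?_, hS⟩
  have hlarge : C / δ + 1 < (2 * π * s + π) ^ 2 := hs.trans_le (abs_le_sq_two_mul_pi_mul_add_pi s)
  have hpos : 0 < (2 * π * s + π) ^ 2 := lt_trans (by positivity) hlarge
  rw [inv_mul_lt_iff₀ hpos, ← div_lt_iff₀ hδ]
  linarith

/-- for even `n > 2` and every `δ > 0`, there is `M > 0` such that for every
integer `s > M` and every `t` with `|t| ≤ 1/2`,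
`∑_{k∈ℤ} (2πk+πt)^{2(n-2)} / ((2πs+π)^n - (2πk+πt)^n)² < δ`. -/
theorem tail_sum_small
    (n : ℕ) (hn : Even n) (hn2 : 2 < n) (δ : ℝ) (hδ : 0 < δ) :
    ∃ M : ℝ, 0 < M ∧ ∀ s : ℤ, M < (s : ℝ) → ∀ t : ℝ, |t| ≤ 1 / 2 →
      ∑' k : ℤ, (2 * π * k + π * t) ^ (2 * (n - 2)) /
        ((2 * π * s + π) ^ n - (2 * π * k + π * t) ^ n) ^ 2 < δ := by
  obtain ⟨M, hM, hsmall⟩ := tail_sum_small_general hn2.le one_half_lt_one hδ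
  refine ⟨M, hM, fun s hs t ht => ?_⟩
  obtain ⟨S, hSδ, hS⟩ := hsmall s (hs.trans_le (le_abs_self _)) t ht
  exact hS.tsum_eq.trans_lt hSδ
end
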